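/- arXiv:2505.20351 — 4 statements merged into one kernel-verified Lean document; each statement's English description precedes it below -/
import Mathlib

section
/- Let b > 0, μ₁ > 0, μ₂ > 0, and let X₁ ~ Lap(μ₁, b) and X₂ ~ Lap(μ₂, b) be independent. Let a > 0 with a ≠ 1 and suppose μ₁/a ≥ μ₂. Then P(X₁ < a·X₂) = (−1/(2(a+1)(a−1)))·exp((μ₂·a − μ₁)/b) + (a²/(2(a+1)(a−1)))·exp((μ₂ − μ₁/a)/b). -/
open MeasureTheory ProbabilityTheory Filter

/-- The Laplace distribution on `ℝ` with location `μ` and scale `b`,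
given by the density `x ↦ (1/(2b)) * exp (-|x - μ| / b)`. -/
noncomputable def laplaceMeasure (μ b : ℝ) : Measure ℝ :=
  MeasureTheory.volume.withDensity
    fun x => ENNReal.ofReal ((1 / (2 * b)) * Real.exp (-|x - μ| / b))

/-!
The characteristic function of `laplaceMeasure μ b` is `exp (i μ t) / (1 + b² t²)`, so the partial
fraction decomposition
`(b₂² - b₁²) / ((1 + b₁² t²) (1 + b₂² t²)) = b₂² / (1 + b₂² t²) - b₁² / (1 + b₁² t²)`
exhibits the convolution of two Laplace laws with different scales as an affine combination of the
two Laplace laws with those scales and the summed location. The event `X₁ < a X₂` says that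
`X₁ - a X₂` is negative, and `-a X₂` is again a Laplace variable, so its probability is the same
combination of two half-line masses of Laplace laws. As the location `μ₁ - a μ₂` is nonnegative,
these are left tails, which are pure exponentials.
-/

lemma partial_fractions_one_add_mul {K : Type*} [Field K] {u v s : K}
    (hu : 1 + u * s ≠ 0) (hv : 1 + v * s ≠ 0) :
    v * ((1 + u * s)⁻¹ * (1 + v * s)⁻¹) + u * (1 + u * s)⁻¹ =
      u * ((1 + u * s)⁻¹ * (1 + v * s)⁻¹) + v * (1 + v * s)⁻¹ := by
  field_simp
  ring

section CharFun

variable {E : Type*} [MeasurableSpace E]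

lemma charFun_smul_nnreal_measure [Inner ℝ E] (c : NNReal) (ν : Measure E) (t : E) :
    charFun (c • ν) t = c * charFun ν t := by
  rw [charFun_apply, charFun_apply, integral_smul_nnreal_measure, NNReal.smul_def,
    Complex.real_smul]

lemma charFun_add_measure [SeminormedAddCommGroup E] [InnerProductSpace ℝ E]
    [OpensMeasurableSpace E] (ν ρ : Measure E) [IsFiniteMeasure ν] [IsFiniteMeasure ρ] (t : E) :
    charFun (ν + ρ) t = charFun ν t + charFun ρ t := by
  simp only [charFun_eq_integral_innerProbChar]
  exact integral_add_measure (BoundedContinuousFunction.integrable _ _)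
    (BoundedContinuousFunction.integrable _ _)

end CharFun

lemma integral_cexp_mul_sub_mul_abs {z : ℂ} {c : ℝ} (hz : |z.re| < c) :
    ∫ x : ℝ, Complex.exp (z * x - c * |x|) = 2 * c / (c ^ 2 - z ^ 2) := by
  obtain ⟨hlo, hhi⟩ := abs_lt.mp hz
  have hadd : 0 < (z + c).re := by rw [Complex.add_re, Complex.ofReal_re]; linarith
  have hsub : (z - c).re < 0 := by rw [Complex.sub_re, Complex.ofReal_re]; linarith
  have hneg : Set.EqOn (fun x : ℝ => Complex.exp (z * x - c * |x|))
      (fun x => Complex.exp ((z + c) * x)) (Set.Iic 0) := fun x hx => by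
    simp only [abs_of_nonpos (Set.mem_Iic.mp hx), Complex.ofReal_neg]
    ring_nf
  have hpos : Set.EqOn (fun x : ℝ => Complex.exp (z * x - c * |x|))
      (fun x => Complex.exp ((z - c) * x)) (Set.Ioi 0) := fun x hx => by
    simp only [abs_of_pos (Set.mem_Ioi.mp hx)]
    ring_nf
  have hadd_ne : z + c ≠ 0 := fun h => hadd.ne' (by rw [h, Complex.zero_re])
  have hsub_ne : z - c ≠ 0 := fun h => hsub.ne (by rw [h, Complex.zero_re])
  have hdenom : (c : ℂ) ^ 2 - z ^ 2 ≠ 0 := by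
    rw [show (c : ℂ) ^ 2 - z ^ 2 = -((z + c) * (z - c)) by ring]
    exact neg_ne_zero.mpr (mul_ne_zero hadd_ne hsub_ne)
  have hint_neg := (integrableOn_congr_fun hneg measurableSet_Iic).mpr
    (integrableOn_exp_mul_complex_Iic hadd 0)
  have hint_pos := (integrableOn_congr_fun hpos measurableSet_Ioi).mpr
    (integrableOn_exp_mul_complex_Ioi hsub 0)
  calc ∫ x : ℝ, Complex.exp (z * x - c * |x|)
      = (∫ x : ℝ in Set.Iic 0, Complex.exp ((z + c) * x)) +
          ∫ x : ℝ in Set.Ioi 0, Complex.exp ((z - c) * x) := by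
        rw [← intervalIntegral.integral_Iic_add_Ioi hint_neg hint_pos,
          setIntegral_congr_fun measurableSet_Iic hneg,
          setIntegral_congr_fun measurableSet_Ioi hpos]
    _ = 1 / (z + c) + -1 / (z - c) := by
        simp only [integral_exp_mul_complex_Iic hadd, integral_exp_mul_complex_Ioi hsub,
          Complex.ofReal_zero, mul_zero, Complex.exp_zero]
    _ = 2 * c / (c ^ 2 - z ^ 2) := by
        field_simp
        ring

section Laplace

variable {b : ℝ}

lemma integral_laplaceMeasure {E : Type*} [NormedAddCommGroup E] [NormedSpace ℝ E]
    (μ : ℝ) (hb : 0 ≤ b) (f : ℝ → E) :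
    ∫ x, f x ∂laplaceMeasure μ b = ∫ x, (1 / (2 * b) * Real.exp (-|x - μ| / b)) • f x := by
  rw [laplaceMeasure, integral_withDensity_eq_integral_toReal_smul (by fun_prop)
    (Eventually.of_forall fun _ => ENNReal.ofReal_lt_top)]
  refine integral_congr_ae (Eventually.of_forall fun x => ?_)
  beta_reduce
  rw [ENNReal.toReal_ofReal (by positivity)]

lemma charFun_laplaceMeasure (μ : ℝ) (hb : 0 < b) (t : ℝ) :
    charFun (laplaceMeasure μ b) t =
      Complex.exp (t * μ * Complex.I) / (1 + (b : ℂ) ^ 2 * t ^ 2) := by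
  have hre : |(t * Complex.I).re| < b⁻¹ := by simpa using hb
  have hdensity (x : ℝ) :
      (1 / (2 * b) * Real.exp (-|x - μ| / b)) • Complex.exp (t * x * Complex.I) =
        Complex.exp (t * μ * Complex.I) / (2 * b) *
          Complex.exp (t * Complex.I * ↑(x - μ) - ↑b⁻¹ * ↑|x - μ|) := by
    have hexp : Complex.exp (t * μ * Complex.I +
        (t * Complex.I * ↑(x - μ) - ↑b⁻¹ * ↑|x - μ|)) =
          Complex.exp (-|x - μ| / b) * Complex.exp (t * x * Complex.I) := by
      rw [← Complex.exp_add]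
      push_cast
      ring_nf
    rw [Complex.real_smul, div_mul_eq_mul_div (Complex.exp _), ← Complex.exp_add, hexp]
    push_cast
    ring
  have hb' : (b : ℂ) ≠ 0 := Complex.ofReal_ne_zero.mpr hb.ne'
  calc charFun (laplaceMeasure μ b) t
      = ∫ x : ℝ, Complex.exp (t * μ * Complex.I) / (2 * b) *
          Complex.exp (t * Complex.I * ↑(x - μ) - ↑b⁻¹ * ↑|x - μ|) := by
        simp only [charFun_apply_real, integral_laplaceMeasure μ hb.le, hdensity]
    _ = Complex.exp (t * μ * Complex.I) / (2 * b) *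
          (2 * ↑b⁻¹ / ((b⁻¹ : ℝ) ^ 2 - (t * Complex.I) ^ 2)) := by
        rw [integral_const_mul, integral_sub_right_eq_self
          (fun x : ℝ => Complex.exp (t * Complex.I * x - ↑b⁻¹ * |x|)),
          integral_cexp_mul_sub_mul_abs hre]
    _ = Complex.exp (t * μ * Complex.I) / (1 + (b : ℂ) ^ 2 * t ^ 2) := by
        rw [mul_pow, Complex.I_sq]
        push_cast
        field_simp
        ring

lemma isProbabilityMeasure_laplaceMeasure (μ : ℝ) (hb : 0 < b) :
    IsProbabilityMeasure (laplaceMeasure μ b) := by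
  have h : ((laplaceMeasure μ b).real Set.univ : ℂ) = 1 := by
    simp [← charFun_zero, charFun_laplaceMeasure μ hb]
  exact isProbabilityMeasure_iff_real.mpr (mod_cast h)

lemma map_const_mul_laplaceMeasure {a : ℝ} (ha : a ≠ 0) (μ : ℝ) (hb : 0 < b) :
    (laplaceMeasure μ b).map (a * ·) = laplaceMeasure (a * μ) (|a| * b) := by
  have hab : 0 < |a| * b := by positivity
  have := isProbabilityMeasure_laplaceMeasure μ hb
  have := isProbabilityMeasure_laplaceMeasure (a * μ) hab
  refine Measure.ext_of_charFun (funext fun t => ?_)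
  have habs : ((|a| : ℝ) : ℂ) ^ 2 = a ^ 2 := mod_cast sq_abs a
  rw [charFun_map_mul, charFun_laplaceMeasure μ hb, charFun_laplaceMeasure _ hab]
  push_cast
  rw [mul_pow, mul_pow, habs]
  ring_nf

lemma hasLaw_const_mul_laplaceMeasure {Ω : Type*} [MeasurableSpace Ω] {P : Measure Ω} {a μ : ℝ}
    (ha : a ≠ 0) (hb : 0 < b) {X : Ω → ℝ} (hX : HasLaw X (laplaceMeasure μ b) P) :
    HasLaw (fun ω => a * X ω) (laplaceMeasure (a * μ) (|a| * b)) P :=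
  HasLaw.fun_comp ⟨by fun_prop, map_const_mul_laplaceMeasure ha μ hb⟩ hX

lemma laplaceMeasure_real_Iio {μ t : ℝ} (hb : 0 < b) (ht : t ≤ μ) :
    (laplaceMeasure μ b).real (Set.Iio t) = Real.exp ((t - μ) / b) / 2 := by
  have hdensity : Set.EqOn (fun x => 1 / (2 * b) * Real.exp (-|x - μ| / b))
      (fun x => Real.exp (-μ / b) / (2 * b) * Real.exp (b⁻¹ * x)) (Set.Iic t) := fun x hx => by
    have hxμ : x - μ ≤ 0 := sub_nonpos.mpr (le_trans hx ht)
    simp only [abs_of_nonpos hxμ]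
    rw [div_mul_eq_mul_div, div_mul_eq_mul_div, ← Real.exp_add, one_mul]
    ring_nf
  calc (laplaceMeasure μ b).real (Set.Iio t)
      = ∫ x in Set.Iio t, 1 / (2 * b) * Real.exp (-|x - μ| / b) := by
        rw [Measure.real, laplaceMeasure, withDensity_apply _ measurableSet_Iio,
          integral_eq_lintegral_of_nonneg_ae (Eventually.of_forall fun x => by positivity)
            (Measurable.aestronglyMeasurable (by fun_prop))]
    _ = Real.exp (-μ / b) / (2 * b) * (Real.exp (b⁻¹ * t) / b⁻¹) := by
        rw [← integral_Iic_eq_integral_Iio, setIntegral_congr_fun measurableSet_Iic hdensity,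
          integral_const_mul, integral_exp_mul_Iic (inv_pos.mpr hb)]
    _ = Real.exp ((t - μ) / b) / 2 := by
        rw [show (t - μ) / b = -μ / b + b⁻¹ * t by ring, Real.exp_add]
        field_simp

end Laplace

section Convolution

variable {b₁ b₂ : ℝ}

-- The affine combination of measures, with both sides moved so that no subtraction occurs.
lemma conv_laplaceMeasure (μ₁ μ₂ : ℝ) (hb₁ : 0 < b₁) (hb₂ : 0 < b₂) :
    (b₂ ^ 2).toNNReal • (laplaceMeasure μ₁ b₁ ∗ laplaceMeasure μ₂ b₂) +
        (b₁ ^ 2).toNNReal • laplaceMeasure (μ₁ + μ₂) b₁ =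
      (b₁ ^ 2).toNNReal • (laplaceMeasure μ₁ b₁ ∗ laplaceMeasure μ₂ b₂) +
        (b₂ ^ 2).toNNReal • laplaceMeasure (μ₁ + μ₂) b₂ := by
  have := isProbabilityMeasure_laplaceMeasure μ₁ hb₁
  have := isProbabilityMeasure_laplaceMeasure μ₂ hb₂
  have := isProbabilityMeasure_laplaceMeasure (μ₁ + μ₂) hb₁
  have := isProbabilityMeasure_laplaceMeasure (μ₁ + μ₂) hb₂
  have hdenom (b t : ℝ) : 1 + (b : ℂ) ^ 2 * (t : ℂ) ^ 2 ≠ 0 := by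
    have : 1 + b ^ 2 * t ^ 2 ≠ 0 := by positivity
    exact mod_cast this
  have hcoe (b : ℝ) : (((b ^ 2).toNNReal : ℝ) : ℂ) = b ^ 2 := by
    rw [Real.coe_toNNReal _ (sq_nonneg b), Complex.ofReal_pow]
  refine Measure.ext_of_charFun (funext fun t => ?_)
  have hexp : Complex.exp (t * (μ₁ + μ₂ : ℝ) * Complex.I) =
      Complex.exp (t * μ₁ * Complex.I) * Complex.exp (t * μ₂ * Complex.I) := by
    rw [← Complex.exp_add, Complex.ofReal_add]
    ring_nf
  simp only [charFun_add_measure, charFun_smul_nnreal_measure, charFun_conv,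
    charFun_laplaceMeasure _ hb₁, charFun_laplaceMeasure _ hb₂, hexp, hcoe]
  linear_combination (Complex.exp (t * μ₁ * Complex.I) * Complex.exp (t * μ₂ * Complex.I)) *
    partial_fractions_one_add_mul (hdenom b₁ t) (hdenom b₂ t)

lemma conv_laplaceMeasure_real_Iio {μ₁ μ₂ t : ℝ} (hb₁ : 0 < b₁) (hb₂ : 0 < b₂)
    (ht : t ≤ μ₁ + μ₂) :
    (b₂ ^ 2 - b₁ ^ 2) * (laplaceMeasure μ₁ b₁ ∗ laplaceMeasure μ₂ b₂).real (Set.Iio t) =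
      (b₂ ^ 2 * Real.exp ((t - (μ₁ + μ₂)) / b₂) -
        b₁ ^ 2 * Real.exp ((t - (μ₁ + μ₂)) / b₁)) / 2 := by
  have := isProbabilityMeasure_laplaceMeasure μ₁ hb₁
  have := isProbabilityMeasure_laplaceMeasure μ₂ hb₂
  have := isProbabilityMeasure_laplaceMeasure (μ₁ + μ₂) hb₁
  have := isProbabilityMeasure_laplaceMeasure (μ₁ + μ₂) hb₂
  have hmass := congrArg (·.real (Set.Iio t)) (conv_laplaceMeasure μ₁ μ₂ hb₁ hb₂)
  beta_reduce at hmass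
  rw [measureReal_add_apply, measureReal_add_apply] at hmass
  simp only [measureReal_nnreal_smul_apply, Real.coe_toNNReal _ (sq_nonneg _),
    laplaceMeasure_real_Iio hb₁ ht, laplaceMeasure_real_Iio hb₂ ht] at hmass
  linarith

end Convolution

theorem laplace_ratio_cdf_of_ge_general {Ω : Type*} [MeasurableSpace Ω] {P : Measure Ω}
    {b₁ b₂ μ₁ μ₂ a : ℝ} (hb₁ : 0 < b₁) (hb₂ : 0 < b₂) (ha : a ≠ 0) (hscale : |a| * b₂ ≠ b₁)
    (hge : a * μ₂ ≤ μ₁) {X₁ X₂ : Ω → ℝ} (hindep : IndepFun X₁ X₂ P)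
    (h₁ : HasLaw X₁ (laplaceMeasure μ₁ b₁) P) (h₂ : HasLaw X₂ (laplaceMeasure μ₂ b₂) P) :
    P.real {ω | X₁ ω < a * X₂ ω} =
      ((|a| * b₂) ^ 2 * Real.exp ((a * μ₂ - μ₁) / (|a| * b₂)) -
        b₁ ^ 2 * Real.exp ((a * μ₂ - μ₁) / b₁)) / (2 * ((|a| * b₂) ^ 2 - b₁ ^ 2)) := by
  have := isProbabilityMeasure_laplaceMeasure μ₁ hb₁
  have := h₁.isProbabilityMeasure
  have hab : 0 < |a| * b₂ := by positivity
  have hscaled := hasLaw_const_mul_laplaceMeasure (neg_ne_zero.mpr ha) hb₂ h₂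
  rw [abs_neg] at hscaled
  have := isProbabilityMeasure_laplaceMeasure (-a * μ₂) hab
  have hsum := (hindep.comp measurable_id (measurable_const_mul (-a))).hasLaw_add h₁ hscaled
  have hevent : {ω | X₁ ω < a * X₂ ω} = {ω | X₁ ω + -a * X₂ ω < 0} := by
    ext ω
    simp only [Set.mem_ofPred_eq, neg_mul, ← sub_eq_add_neg, sub_neg]
  have hprob : P.real {ω | X₁ ω < a * X₂ ω} =
      (laplaceMeasure μ₁ b₁ ∗ laplaceMeasure (-a * μ₂) (|a| * b₂)).real (Set.Iio 0) :=
    hevent ▸ hsum.measureReal_eq (p := (· < 0)) measurableSet_Iio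
  have hmass := conv_laplaceMeasure_real_Iio hb₁ hab (show 0 ≤ μ₁ + -a * μ₂ by linarith)
  have hdenom : (|a| * b₂) ^ 2 - b₁ ^ 2 ≠ 0 :=
    sub_ne_zero.mpr fun h => hscale ((sq_eq_sq₀ hab.le hb₁.le).mp h)
  rw [← hprob, show 0 - (μ₁ + -a * μ₂) = a * μ₂ - μ₁ by ring] at hmass
  rw [eq_div_iff (mul_ne_zero two_ne_zero hdenom)]
  linarith

/-- CDF of a ratio of two independent Laplace random variables, case `μ₁/a ≥ μ₂`. -/
theorem laplace_ratio_cdf_of_ge {Ω : Type*} [MeasurableSpace Ω]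
    (P : Measure Ω) [IsProbabilityMeasure P]
    (b μ₁ μ₂ a : ℝ) (hb : 0 < b) (hμ₁ : 0 < μ₁) (hμ₂ : 0 < μ₂)
    (ha : 0 < a) (ha1 : a ≠ 1) (hge : μ₂ ≤ μ₁ / a)
    (X₁ X₂ : Ω → ℝ) (hm₁ : Measurable X₁) (hm₂ : Measurable X₂)
    (hindep : IndepFun X₁ X₂ P)
    (h₁ : Measure.map X₁ P = laplaceMeasure μ₁ b)
    (h₂ : Measure.map X₂ P = laplaceMeasure μ₂ b) :
    (P {ω | X₁ ω < a * X₂ ω}).toReal =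
      (-1 / (2 * (a + 1) * (a - 1))) * Real.exp ((μ₂ * a - μ₁) / b) +
      (a ^ 2 / (2 * (a + 1) * (a - 1))) * Real.exp ((μ₂ - μ₁ / a) / b) := by
  have hscale : |a| * b ≠ b := by rwa [abs_of_pos ha, Ne, mul_eq_right₀ hb.ne']
  have hexponent : (μ₂ - μ₁ / a) / b = (a * μ₂ - μ₁) / (a * b) := by field_simp
  refine (laplace_ratio_cdf_of_ge_general hb hb ha.ne' hscale ((le_div_iff₀' ha).mp hge) hindep
    ⟨hm₁.aemeasurable, h₁⟩ ⟨hm₂.aemeasurable, h₂⟩).trans ?_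
  rw [abs_of_pos ha, hexponent, mul_comm μ₂,
    show 2 * ((a * b) ^ 2 - b ^ 2) = b ^ 2 * (2 * (a + 1) * (a - 1)) by ring, ← div_div]
  field_simp
  ring
end

section
/- Fix Z > 0, ε > 0, and α with 0 < α < Z. For each real Y > 0 set X = Z·Y, let L₁, L₂ be independent random variables with L₁, L₂ ~ Lap(2/ε), and set Z̃_Y = (X + L₁)/(Y + L₂). Then lim_{Y → ∞} P(|Z̃_Y − Z| > α) = 0; that is, the ratio of Laplace-noised counts converges in probability to the true ratio Z as the denominator count grows. -/
open MeasureTheory ProbabilityTheory Filter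

/-!
Dividing numerator and denominator by `Y` writes the noised ratio as
`(Z + L₁ / Y) / (1 + L₂ / Y)`. The laws of the noises form a tight family, so `L₁ / Y` and `L₂ / Y`
tend to `0` in probability, jointly as well; the map `(x, y) ↦ (Z + x) / (1 + y)` is continuous at
`(0, 0)`, where its value is `Z`, and convergence in probability to a constant is preserved by
maps continuous at that constant.
-/

section TendstoInMeasure

variable {Ω ι E F : Type*} [MeasurableSpace Ω] {P : Measure Ω} {l : Filter ι}

lemma tendstoInMeasure_prodMk [PseudoEMetricSpace E] [PseudoEMetricSpace F]
    {X : ι → Ω → E} {Y : ι → Ω → F} {X₀ : Ω → E} {Y₀ : Ω → F}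
    (hX : TendstoInMeasure P X l X₀) (hY : TendstoInMeasure P Y l Y₀) :
    TendstoInMeasure P (fun i ω ↦ (X i ω, Y i ω)) l (fun ω ↦ (X₀ ω, Y₀ ω)) := by
  intro ε hε
  have hsum := (hX ε hε).add (hY ε hε)
  rw [add_zero] at hsum
  refine tendsto_of_tendsto_of_tendsto_of_le_of_le tendsto_const_nhds hsum
    (fun _ ↦ zero_le) fun i ↦ ?_
  calc P {ω | ε ≤ edist (X i ω, Y i ω) (X₀ ω, Y₀ ω)}
      = P ({ω | ε ≤ edist (X i ω) (X₀ ω)} ∪ {ω | ε ≤ edist (Y i ω) (Y₀ ω)}) := by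
        simp only [Prod.edist_eq, le_max_iff, Set.ofPred_or]
    _ ≤ _ := measure_union_le _ _

lemma tendstoInMeasure_comp_of_continuousAt [PseudoEMetricSpace E] [PseudoEMetricSpace F]
    {X : ι → Ω → E} {c : E} {φ : E → F} (hX : TendstoInMeasure P X l fun _ ↦ c)
    (hφ : ContinuousAt φ c) : TendstoInMeasure P (fun i ω ↦ φ (X i ω)) l fun _ ↦ φ c := by
  intro ε hε
  obtain ⟨δ, hδ, hφδ⟩ := EMetric.continuousAt_iff.mp hφ ε hε
  refine tendsto_of_tendsto_of_tendsto_of_le_of_le tendsto_const_nhds (hX δ hδ)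
    (fun _ ↦ zero_le) fun i ↦ measure_mono fun ω hω ↦ ?_
  exact not_lt.mp fun hlt ↦ (hφδ hlt).not_ge hω

lemma tendsto_measure_lt_dist_of_tendstoInMeasure [PseudoMetricSpace E] {X : ι → Ω → E}
    {X₀ : Ω → E} (hX : TendstoInMeasure P X l X₀) {ε : ℝ} (hε : 0 < ε) :
    Tendsto (fun i ↦ P {ω | ε < dist (X i ω) (X₀ ω)}) l (nhds 0) :=
  tendsto_of_tendsto_of_tendsto_of_le_of_le tendsto_const_nhds
    (tendstoInMeasure_iff_dist.mp hX ε hε) (fun _ ↦ zero_le)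
    fun _ ↦ measure_mono fun _ (hω : ε < _) ↦ hω.le

end TendstoInMeasure

section Tight

variable {Ω ι E 𝕜 : Type*} [MeasurableSpace Ω] {P : Measure Ω} {l : Filter ι}

lemma isTightMeasureSet_range_map_of_map_eq [MeasurableSpace E] [TopologicalSpace E]
    [TopologicalSpace.IsCompletelyPseudoMetrizableSpace E] [SecondCountableTopology E]
    [BorelSpace E] [IsFiniteMeasure P] {L : ι → Ω → E} {ν : Measure E}
    (hL : ∀ i, P.map (L i) = ν) : IsTightMeasureSet (Set.range fun i ↦ P.map (L i)) := by
  obtain _ | ⟨⟨i⟩⟩ := isEmpty_or_nonempty ι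
  · rw [Set.range_eq_empty]
    exact isTightMeasureSet_singleton (μ := 0) |>.subset (Set.empty_subset _)
  · refine isTightMeasureSet_singleton (μ := P.map (L i)) |>.subset ?_
    rintro _ ⟨j, rfl⟩
    exact (hL j).trans (hL i).symm

lemma tendstoInMeasure_inv_smul_zero_of_isTightMeasureSet [NormedField 𝕜]
    [NormedAddCommGroup E] [NormedSpace 𝕜 E] [MeasurableSpace E] [OpensMeasurableSpace E]
    {L : ι → Ω → E} {s : ι → 𝕜} (hL : IsTightMeasureSet (Set.range fun i ↦ P.map (L i)))
    (hm : ∀ i, AEMeasurable (L i) P) (hs : Tendsto s l (Bornology.cobounded 𝕜)) :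
    TendstoInMeasure P (fun i ω ↦ (s i)⁻¹ • L i ω) l fun _ ↦ 0 := by
  rw [tendstoInMeasure_iff_norm]
  intro ε hε
  have hnorm : Tendsto (fun i ↦ ‖s i‖) l atTop := tendsto_norm_cobounded_atTop.comp hs
  have htail := (tendsto_measure_norm_gt_of_isTightMeasureSet hL).comp
    (hnorm.const_mul_atTop (half_pos hε))
  refine tendsto_of_tendsto_of_tendsto_of_le_of_le' tendsto_const_nhds htail
    (Eventually.of_forall fun _ ↦ zero_le) ?_
  filter_upwards [hnorm.eventually_gt_atTop 0] with i hi
  have hsub : {ω | ε ≤ ‖(s i)⁻¹ • L i ω - 0‖} ⊆ L i ⁻¹' {x | ε / 2 * ‖s i‖ < ‖x‖} := by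
    intro ω (hω : ε ≤ ‖(s i)⁻¹ • L i ω - 0‖)
    rw [sub_zero, norm_smul, norm_inv, inv_mul_eq_div, le_div_iff₀ hi] at hω
    exact (mul_lt_mul_of_pos_right (half_lt_self hε) hi).trans_le hω
  calc P {ω | ε ≤ ‖(s i)⁻¹ • L i ω - 0‖}
      ≤ P (L i ⁻¹' {x | ε / 2 * ‖s i‖ < ‖x‖}) := measure_mono hsub
    _ = P.map (L i) {x | ε / 2 * ‖s i‖ < ‖x‖} :=
        (Measure.map_apply_of_aemeasurable (hm i)
          (measurableSet_lt measurable_const measurable_norm)).symm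
    _ ≤ ⨆ μ ∈ Set.range fun i ↦ P.map (L i), μ {x | ε / 2 * ‖s i‖ < ‖x‖} :=
        le_iSup₂ (f := fun (μ : Measure E) _ ↦ μ {x | ε / 2 * ‖s i‖ < ‖x‖}) _
          (Set.mem_range_self i)

theorem laplaceNoisedCounts_consistent_general [NormedField 𝕜] [MeasurableSpace 𝕜]
    [OpensMeasurableSpace 𝕜] {L₁ L₂ : ι → Ω → 𝕜} {Y : ι → 𝕜} (Z : 𝕜)
    (hY : Tendsto Y l (Bornology.cobounded 𝕜))
    (hm₁ : ∀ i, AEMeasurable (L₁ i) P) (hm₂ : ∀ i, AEMeasurable (L₂ i) P)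
    (hL₁ : IsTightMeasureSet (Set.range fun i ↦ P.map (L₁ i)))
    (hL₂ : IsTightMeasureSet (Set.range fun i ↦ P.map (L₂ i))) :
    TendstoInMeasure P (fun i ω ↦ (Z * Y i + L₁ i ω) / (Y i + L₂ i ω)) l fun _ ↦ Z := by
  have hnoise := tendstoInMeasure_prodMk
    (tendstoInMeasure_inv_smul_zero_of_isTightMeasureSet hL₁ hm₁ hY)
    (tendstoInMeasure_inv_smul_zero_of_isTightMeasureSet hL₂ hm₂ hY)
  have hcont : ContinuousAt (fun p : 𝕜 × 𝕜 ↦ (Z + p.1) / (1 + p.2)) (0, 0) :=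
    ContinuousAt.div (by fun_prop) (by fun_prop) (by simp)
  have hratio := tendstoInMeasure_comp_of_continuousAt hnoise hcont
  simp only [add_zero, div_one] at hratio
  refine hratio.congr' ?_ ae_eq_rfl
  filter_upwards [hY.eventually_ne_cobounded 0] with i hi
  filter_upwards with ω
  calc (Z + (Y i)⁻¹ • L₁ i ω) / (1 + (Y i)⁻¹ • L₂ i ω)
      = ((Z * Y i + L₁ i ω) / Y i) / ((Y i + L₂ i ω) / Y i) := by
        simp only [smul_eq_mul, inv_mul_eq_div, add_div, mul_div_cancel_right₀ Z hi, div_self hi]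
    _ = (Z * Y i + L₁ i ω) / (Y i + L₂ i ω) := div_div_div_cancel_right₀ hi _ _

end Tight

/-- **Consistency of the ratio of Laplace-noised counts.**  With `X = Z·Y` and
independent `Lap(2/ε)` noises `L₁ Y, L₂ Y`, the noisy ratio `(X + L₁)/(Y + L₂)` converges
in probability to `Z` as `Y → ∞`. -/
theorem laplaceNoisedCounts_consistent {Ω : Type*} [MeasurableSpace Ω]
    (P : Measure Ω) [IsProbabilityMeasure P]
    (Z ε α : ℝ) (hZ : 0 < Z) (hε : 0 < ε) (hα0 : 0 < α) (hαZ : α < Z)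
    (L₁ L₂ : ℝ → Ω → ℝ)
    (hm₁ : ∀ Y, Measurable (L₁ Y)) (hm₂ : ∀ Y, Measurable (L₂ Y))
    (hindep : ∀ Y, IndepFun (L₁ Y) (L₂ Y) P)
    (hL₁ : ∀ Y, Measure.map (L₁ Y) P = laplaceMeasure 0 (2 / ε))
    (hL₂ : ∀ Y, Measure.map (L₂ Y) P = laplaceMeasure 0 (2 / ε)) :
    Tendsto (fun Y : ℝ => P {ω | α < |(Z * Y + L₁ Y ω) / (Y + L₂ Y ω) - Z|})
      atTop (nhds 0) := by
  exact tendsto_measure_lt_dist_of_tendstoInMeasure (laplaceNoisedCounts_consistent_general Z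
    (tendsto_id.mono_right IsOrderBornology.atTop_le_cobounded)
    (fun Y ↦ (hm₁ Y).aemeasurable) (fun Y ↦ (hm₂ Y).aemeasurable)
    (isTightMeasureSet_range_map_of_map_eq hL₁) (isTightMeasureSet_range_map_of_map_eq hL₂)) hα0
end

section
/- Fix Z > 0 and ε > 0. For each natural number Y ≥ 1 set X = Z·Y, let L₁, L₂ be independent random variables with L₁, L₂ ~ Lap(2/ε), and set Z̃_Y = (X + L₁)/max(Y + L₂, 1). Then lim_{Y → ∞} E[Z̃_Y] = Z; that is, the bias of the maxed ratio of Laplace-noised counts vanishes as the denominator count grows. -/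
/-!
Write `M = max (y + b) c` for the floored noisy denominator. Then
`(Z * y + a) / M - Z = (a - Z * (M - y)) / M`, where `|M - y| ≤ |b|` and `y ≤ (1 + |b| / c) * M`.
The error is therefore at most `(|a| + |Z| * |b|) * (1 + |b| / c) / y`, quadratic in the noise and
of order `1 / y`: the bias is `O(1 / y)` as soon as the noise has bounded second moments, whatever
the dependence between numerator and denominator. Laplace noise has finite exponential moments near
`0`, hence finite second moments.
-/

open MeasureTheory ProbabilityTheory Filter

section MaxedRatio

theorem abs_maxed_ratio_sub_le (Z a b : ℝ) {y c : ℝ} (hc : 0 < c) (hcy : c ≤ y) :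
    |(Z * y + a) / max (y + b) c - Z| ≤ (1 + a ^ 2 + (Z ^ 2 + 1 / c ^ 2) * b ^ 2) / y := by
  have hy : 0 < y := hc.trans_le hcy
  have hcM : c ≤ max (y + b) c := le_max_right _ _
  have h_dist : |max (y + b) c - y| ≤ |b| := by
    simpa [max_eq_left hcy] using abs_max_sub_max_le_abs (y + b) y c
  set M := max (y + b) c
  have hM : 0 < M := hc.trans_le hcM
  have h_err : (Z * y + a) / M - Z = (a - Z * (M - y)) / M := by field_simp; ring
  have h_num : |a - Z * (M - y)| ≤ |a| + |Z| * |b| := calc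
    |a - Z * (M - y)| ≤ |a| + |Z * (M - y)| := abs_sub _ _
    _ ≤ |a| + |Z| * |b| := by rw [abs_mul]; gcongr
  have h_den : y ≤ (1 + |b| / c) * M := calc
    y ≤ M + |b| * 1 := by linarith [neg_abs_le (M - y)]
    _ ≤ M + |b| * (M / c) := by gcongr; exact (one_le_div hc).2 hcM
    _ = (1 + |b| / c) * M := by ring
  have h_prod : (|a| + |Z| * |b|) * (1 + |b| / c)
      ≤ 1 + a ^ 2 + (Z ^ 2 + 1 / c ^ 2) * b ^ 2 := calc
    _ ≤ ((|a| + |Z| * |b|) ^ 2 + (1 + |b| / c) ^ 2) / 2 := by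
      linarith [two_mul_le_add_sq (|a| + |Z| * |b|) (1 + |b| / c)]
    _ ≤ (|a| ^ 2 + (|Z| * |b|) ^ 2) + (1 ^ 2 + (|b| / c) ^ 2) := by
      linarith [add_sq_le (a := |a|) (b := |Z| * |b|), add_sq_le (a := 1) (b := |b| / c)]
    _ = 1 + a ^ 2 + (Z ^ 2 + 1 / c ^ 2) * b ^ 2 := by
      simp only [mul_pow, div_pow, sq_abs]; ring
  calc |(Z * y + a) / M - Z| = |a - Z * (M - y)| / M := by
        rw [h_err, abs_div, abs_of_pos hM]
    _ ≤ (|a| + |Z| * |b|) * (1 + |b| / c) / y := by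
        rw [div_le_div_iff₀ hM hy, mul_assoc]; gcongr
    _ ≤ _ := by gcongr

variable {Ω : Type*} [MeasurableSpace Ω] {P : Measure Ω} [IsProbabilityMeasure P]

theorem abs_integral_maxed_ratio_sub_le (Z : ℝ) {y c : ℝ} (hc : 0 < c) (hcy : c ≤ y)
    {A B : Ω → ℝ} (hA : MemLp A 2 P) (hB : MemLp B 2 P) :
    |∫ ω, (Z * y + A ω) / max (y + B ω) c ∂P - Z|
      ≤ (1 + ∫ ω, A ω ^ 2 ∂P + (Z ^ 2 + 1 / c ^ 2) * ∫ ω, B ω ^ 2 ∂P) / y := by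
  have h_le (ω : Ω) := abs_maxed_ratio_sub_le Z (A ω) (B ω) hc hcy
  have hA_int : Integrable (fun ω => 1 + A ω ^ 2) P := (integrable_const 1).add hA.integrable_sq
  have hB_int : Integrable (fun ω => (Z ^ 2 + 1 / c ^ 2) * B ω ^ 2) P :=
    hB.integrable_sq.const_mul _
  have h_bound_int : Integrable
      (fun ω => (1 + A ω ^ 2 + (Z ^ 2 + 1 / c ^ 2) * B ω ^ 2) / y) P :=
    (hA_int.add hB_int).div_const y
  have h_err_int : Integrable (fun ω => (Z * y + A ω) / max (y + B ω) c - Z) P := by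
    have := hA.aestronglyMeasurable.aemeasurable
    have := hB.aestronglyMeasurable.aemeasurable
    exact h_bound_int.mono' (AEMeasurable.aestronglyMeasurable (by fun_prop)) (ae_of_all P h_le)
  have h_ratio_int : Integrable (fun ω => (Z * y + A ω) / max (y + B ω) c) P :=
    (h_err_int.add (integrable_const Z)).congr (.of_forall fun ω => sub_add_cancel _ Z)
  calc |∫ ω, (Z * y + A ω) / max (y + B ω) c ∂P - Z|
      = |∫ ω, ((Z * y + A ω) / max (y + B ω) c - Z) ∂P| := by
        rw [integral_sub h_ratio_int (integrable_const Z)]; simp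
    _ ≤ ∫ ω, (1 + A ω ^ 2 + (Z ^ 2 + 1 / c ^ 2) * B ω ^ 2) / y ∂P :=
        norm_integral_le_of_norm_le (f := fun ω => (Z * y + A ω) / max (y + B ω) c - Z)
          h_bound_int (ae_of_all P h_le)
    _ = _ := by
        rw [integral_div, integral_add hA_int hB_int,
          integral_add (integrable_const 1) hA.integrable_sq, integral_const_mul]
        simp

theorem bias_maxed_ratio_noisedCounts_tendsto_general {ι : Type*} {l : Filter ι}
    (Z : ℝ) {c : ℝ} (hc : 0 < c) {y : ι → ℝ} (hy : Tendsto y l atTop) {A B : ι → Ω → ℝ}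
    (hA : ∀ i, MemLp (A i) 2 P) (hB : ∀ i, MemLp (B i) 2 P) {C D : ℝ}
    (hAC : ∀ i, ∫ ω, A i ω ^ 2 ∂P ≤ C) (hBD : ∀ i, ∫ ω, B i ω ^ 2 ∂P ≤ D) :
    Tendsto (fun i => ∫ ω, (Z * y i + A i ω) / max (y i + B i ω) c ∂P) l (nhds Z) := by
  refine tendsto_iff_dist_tendsto_zero.2 (squeeze_zero' (.of_forall fun _ => dist_nonneg) ?_
    (hy.const_div_atTop (1 + C + (Z ^ 2 + 1 / c ^ 2) * D)))
  filter_upwards [hy.eventually_ge_atTop c] with i hi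
  have : 0 < y i := hc.trans_le hi
  refine (abs_integral_maxed_ratio_sub_le Z hc hi (hA i) (hB i)).trans ?_
  gcongr
  exacts [hAC i, hBD i]

end MaxedRatio

section Laplace

theorem integrable_exp_neg_mul_abs {r : ℝ} (hr : 0 < r) :
    Integrable fun x : ℝ => Real.exp (-r * |x|) := by
  refine (integrable_fun_norm_addHaar volume (f := fun x : ℝ => Real.exp (-r * x))).2 ?_
  simpa using exp_neg_integrableOn_Ioi 0 hr

theorem integrable_exp_mul_laplaceMeasure (μ : ℝ) {b t : ℝ} (ht : |t| < 1 / b) :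
    Integrable (fun x => Real.exp (t * x)) (laplaceMeasure μ b) := by
  have hb : 0 < b := one_div_pos.1 ((abs_nonneg t).trans_lt ht)
  rw [laplaceMeasure, integrable_withDensity_iff_integrable_smul' (by fun_prop) (by simp)]
  refine (((integrable_exp_neg_mul_abs (sub_pos.2 ht)).comp_sub_right μ).const_mul
    (1 / (2 * b) * Real.exp (t * μ))).mono' (by fun_prop) (ae_of_all _ fun x => ?_)
  rw [ENNReal.toReal_ofReal (by positivity), smul_eq_mul, Real.norm_of_nonneg (by positivity),
    mul_assoc, mul_assoc, ← Real.exp_add, ← Real.exp_add]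
  refine mul_le_mul_of_nonneg_left (Real.exp_le_exp.2 ?_) (by positivity)
  have h_tilt : t * (x - μ) ≤ |t| * |x - μ| := (le_abs_self _).trans_eq (abs_mul _ _)
  calc -|x - μ| / b + t * x = t * μ + (t * (x - μ) - 1 / b * |x - μ|) := by ring
    _ ≤ t * μ + (|t| * |x - μ| - 1 / b * |x - μ|) := by gcongr
    _ = t * μ + -(1 / b - |t|) * |x - μ| := by ring

theorem memLp_id_laplaceMeasure (μ : ℝ) {b : ℝ} (hb : 0 < b) (p : NNReal) :
    MemLp id p (laplaceMeasure μ b) := by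
  refine memLp_of_mem_interior_integrableExpSet (mem_interior_iff_mem_nhds.2 ?_) p
  filter_upwards [Metric.ball_mem_nhds (0 : ℝ) (one_div_pos.2 hb)] with t ht
  exact integrable_exp_mul_laplaceMeasure μ (by simpa using ht)

theorem memLp_of_hasLaw_laplaceMeasure {Ω : Type*} [MeasurableSpace Ω] {P : Measure Ω}
    {X : Ω → ℝ} {μ b : ℝ} (hX : HasLaw X (laplaceMeasure μ b) P) (hb : 0 < b) (p : NNReal) :
    MemLp X p P :=
  (hX.map_eq ▸ memLp_id_laplaceMeasure μ hb p).comp_of_map hX.aemeasurable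

end Laplace

/-- **Vanishing bias of the maxed ratio of Laplace-noised counts.**  Fixing the true
ratio `Z > 0` and letting the denominator count `Y → ∞` (with `X = Z·Y`), the expectation
of `(X + L₁) / max (Y + L₂) 1` tends to `Z`. -/
theorem bias_maxed_ratio_noisedCounts_tendsto {Ω : Type*} [MeasurableSpace Ω]
    (P : Measure Ω) [IsProbabilityMeasure P]
    (Z ε : ℝ) (hZ : 0 < Z) (hε : 0 < ε)
    (L₁ L₂ : ℕ → Ω → ℝ)
    (hm₁ : ∀ Y, Measurable (L₁ Y)) (hm₂ : ∀ Y, Measurable (L₂ Y))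
    (hindep : ∀ Y, IndepFun (L₁ Y) (L₂ Y) P)
    (hL₁ : ∀ Y, Measure.map (L₁ Y) P = laplaceMeasure 0 (2 / ε))
    (hL₂ : ∀ Y, Measure.map (L₂ Y) P = laplaceMeasure 0 (2 / ε)) :
    Tendsto
      (fun Y : ℕ => ∫ ω, (Z * (Y : ℝ) + L₁ Y ω) / max ((Y : ℝ) + L₂ Y ω) 1 ∂P)
      atTop (nhds Z) := by
  have hb : 0 < 2 / ε := by positivity
  have h_law₁ (Y : ℕ) : HasLaw (L₁ Y) (laplaceMeasure 0 (2 / ε)) P := ⟨(hm₁ Y).aemeasurable, hL₁ Y⟩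
  have h_law₂ (Y : ℕ) : HasLaw (L₂ Y) (laplaceMeasure 0 (2 / ε)) P := ⟨(hm₂ Y).aemeasurable, hL₂ Y⟩
  have h_sq {L : Ω → ℝ} (h : HasLaw L (laplaceMeasure 0 (2 / ε)) P) :=
    (h.integral_comp (f := fun x => x ^ 2) (by fun_prop)).le
  exact bias_maxed_ratio_noisedCounts_tendsto_general Z one_pos tendsto_natCast_atTop_atTop
    (fun Y => memLp_of_hasLaw_laplaceMeasure (h_law₁ Y) hb 2)
    (fun Y => memLp_of_hasLaw_laplaceMeasure (h_law₂ Y) hb 2)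
    (fun Y => h_sq (h_law₁ Y)) (fun Y => h_sq (h_law₂ Y))
end

section
/- Let p_x, p_y ∈ (0,1), p = p_x/p_y, Σ > 0, α ∈ (0,1), and z = Φ⁻¹(1 − α/2). Let n_x(k) and n_y(k) be sequences of positive integers tending to infinity. For each k, let X_k ~ Bin(n_x(k), p_x) and Y_k ~ Bin(n_y(k), p_y), and let L_{x,k}, L_{y,k} be real random variables with mean zero and variance Σ, the four variables being mutually independent. Set X̃_k = X_k + L_{x,k}, Ỹ_k = Y_k + L_{y,k}, p̃_k = (X̃_k/n_x(k))/(Ỹ_k/n_y(k)), and Ṽ_k = p̃_k · √(1/X̃_k − 1/n_x(k) + 1/Ỹ_k − 1/n_y(k)). Then P(|p̃_k − p| ≤ z·Ṽ_k) → 1 − α as k → ∞. -/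
open MeasureTheory ProbabilityTheory Filter

/-- The binomial distribution `Bin(n, p)` as a measure on `ℝ`
(the law of the number of successes in `n` independent trials with success probability `p`). -/
noncomputable def binomialReal (n : ℕ) (p : ℝ) (hp : p ≤ 1) : Measure ℝ :=
  ((PMF.binomial (Real.toNNReal p) (Real.toNNReal_le_one.mpr hp) n).toMeasure).map
    (fun i : Fin (n + 1) => ((i : ℕ) : ℝ))

/-!
The relative risk is estimated by a ratio, so errors are measured on the relative scale. With
`v = (1 - px) / (nx * px) + (1 - py) / (ny * py)`, the error
`(X̃ / (nx * px) - Ỹ / (ny * py)) / √v` is a combination, with coefficient vector of Euclidean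
norm `1`, of the standardized noised counts. These are independent and asymptotically standard
normal, the noise being negligible against the binomial fluctuations of order `√n`, so the
combination is asymptotically standard normal as well.

As `X̃ / nx → px` in probability, `1 / X̃ - 1 / nx` is asymptotically equivalent to the first
summand of `v`, and the plug-in standard error divided by `√v` tends to `1` in probability. Where
both noised counts are positive, the coverage event is `|error| ≤ z * R` with `R → 1` in
probability; Slutsky's theorem and the continuity of the normal distribution give its limiting
probability.
-/

open Asymptotics
open scoped Topology

section ConvergenceInProbability

variable {ι Ω : Type*} [MeasurableSpace Ω] {P : Measure Ω} {l : Filter ι}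

/-- The filter on `ι × Ω` whose eventually-true properties are those with probability tending to
`1` along `l`. Convergence in probability of `f : ι → Ω → E` to a constant is ordinary convergence
of `fun q => f q.1 q.2` along it, which makes the calculus of limits available. -/
def inProbability (P : Measure Ω) (l : Filter ι) : Filter (ι × Ω) :=
  comk (fun S => Tendsto (fun i => P {ω | (i, ω) ∈ S}) l (𝓝 0))
    (by simpa using tendsto_const_nhds)
    (fun _ hT _ hST => tendsto_of_tendsto_of_tendsto_of_le_of_le tendsto_const_nhds hT
      (fun _ => zero_le) fun _ => measure_mono fun _ h => hST h)
    (fun _ hS _ hT => tendsto_of_tendsto_of_tendsto_of_le_of_le tendsto_const_nhds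
      (add_zero (0 : ENNReal) ▸ hS.add hT) (fun _ => zero_le) fun _ => measure_union_le _ _)

lemma eventually_inProbability {p : ι × Ω → Prop} :
    (∀ᶠ q in inProbability P l, p q) ↔ Tendsto (fun i => P {ω | ¬ p (i, ω)}) l (𝓝 0) :=
  Iff.rfl

lemma tendsto_fst_inProbability : Tendsto Prod.fst (inProbability P l) l := by
  intro S hS
  refine eventually_inProbability.2 (tendsto_const_nhds.congr' ?_)
  filter_upwards [hS] with i hi
  simp [hi]

lemma tendsto_inProbability_iff {E : Type*} [PseudoMetricSpace E] {f : ι → Ω → E} {c : E} :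
    Tendsto (fun q : ι × Ω => f q.1 q.2) (inProbability P l) (𝓝 c) ↔
      TendstoInMeasure P f l fun _ => c := by
  simp [Metric.nhds_basis_ball.tendsto_right_iff, tendstoInMeasure_iff_dist,
    eventually_inProbability]

lemma tendstoInMeasure_const_of_tendsto_variance [IsFiniteMeasure P] {f : ι → Ω → ℝ} {c : ℝ}
    (hf : ∀ i, MemLp (f i) 2 P) (hmean : ∀ i, P[f i] = c)
    (hvar : Tendsto (fun i => variance (f i) P) l (𝓝 0)) :
    TendstoInMeasure P f l fun _ => c := by
  rw [tendstoInMeasure_iff_dist]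
  intro ε hε
  have hbound : Tendsto (fun i => ENNReal.ofReal (variance (f i) P / ε ^ 2)) l (𝓝 0) := by
    simpa using ENNReal.tendsto_ofReal (hvar.div_const (ε ^ 2))
  exact tendsto_of_tendsto_of_tendsto_of_le_of_le tendsto_const_nhds hbound
    (fun _ => zero_le) fun i => hmean i ▸ meas_ge_le_variance_div_sq (hf i) hε

lemma tendsto_measureReal_of_eventually_iff [IsFiniteMeasure P] {p q : ι → Ω → Prop} {c : ℝ}
    (hp : Tendsto (fun i => P.real {ω | p i ω}) l (𝓝 c))
    (hpq : ∀ᶠ x : ι × Ω in inProbability P l, p x.1 x.2 ↔ q x.1 x.2) :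
    Tendsto (fun i => P.real {ω | q i ω}) l (𝓝 c) := by
  have hdiff : Tendsto (fun i => P.real {ω | ¬ (p i ω ↔ q i ω)}) l (𝓝 0) :=
    (ENNReal.tendsto_toReal ENNReal.zero_ne_top).comp (eventually_inProbability.1 hpq)
  have hle {A B : Set Ω} : P.real A ≤ P.real {ω | ¬ (ω ∈ A ↔ ω ∈ B)} + P.real B :=
    (measureReal_mono fun ω hA => by
      by_cases hB : ω ∈ B <;> simp [hA, hB]).trans (measureReal_union_le _ _)
  refine hp.congr_dist (squeeze_zero (fun _ => dist_nonneg) (fun i => ?_) hdiff)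
  rw [Real.dist_eq, abs_sub_le_iff, sub_le_iff_le_add, sub_le_iff_le_add]
  constructor
  · exact hle
  · simpa only [Set.mem_ofPred_eq, iff_comm] using hle (A := {ω | q i ω}) (B := {ω | p i ω})

end ConvergenceInProbability

section ConvergenceInDistribution

variable {ι Ω Ω' : Type*} [MeasurableSpace Ω] [MeasurableSpace Ω']
  {P : Measure Ω} [IsProbabilityMeasure P] {P' : Measure Ω'} [IsProbabilityMeasure P']
  {l : Filter ι}

lemma tendstoInDistribution_of_forall_identDistrib {E α : Type*} {β γ : ι → Type*}
    [MeasurableSpace E] [TopologicalSpace E] [OpensMeasurableSpace E]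
    [∀ i, MeasurableSpace (β i)] [∀ i, MeasurableSpace (γ i)] [MeasurableSpace α]
    {μ : ∀ i, Measure (β i)} {ν : ∀ i, Measure (γ i)} {ρ : Measure α}
    [∀ i, IsProbabilityMeasure (μ i)] [∀ i, IsProbabilityMeasure (ν i)] [IsProbabilityMeasure ρ]
    {X : ∀ i, β i → E} {Y : ∀ i, γ i → E} {Z : Ω' → E} {W : α → E}
    (h : TendstoInDistribution X l Z μ P') (hXY : ∀ i, IdentDistrib (X i) (Y i) (μ i) (ν i))
    (hZW : IdentDistrib Z W P' ρ) : TendstoInDistribution Y l W ν ρ where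
  forall_aemeasurable i := (hXY i).aemeasurable_snd
  aemeasurable_limit := hZW.aemeasurable_snd
  tendsto := by
    have hlaw i := (hXY i).map_eq.symm
    simpa only [hlaw, hZW.map_eq.symm] using h.tendsto

lemma tendstoInDistribution_comp_of_tendsto {κ E : Type*} [MeasurableSpace E] [TopologicalSpace E]
    [OpensMeasurableSpace E] {X : ι → Ω → E} {Z : Ω' → E} {l' : Filter κ} {u : κ → ι}
    (h : TendstoInDistribution X l Z (fun _ => P) P') (hu : Tendsto u l' l) :
    TendstoInDistribution (fun k => X (u k)) l' Z (fun _ => P) P' :=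
  ⟨fun k => h.forall_aemeasurable (u k), h.aemeasurable_limit, h.tendsto.comp hu⟩

lemma tendstoInMeasure_of_tendstoInDistribution_const {E : Type*} [MeasurableSpace E]
    [PseudoMetricSpace E] [BorelSpace E] {X : ι → Ω → E} {c : E}
    (h : TendstoInDistribution X l (fun _ : Ω' => c) (fun _ => P) P') :
    TendstoInMeasure P X l fun _ => c := by
  rw [tendstoInMeasure_iff_dist]
  intro ε hε
  have hmeas : MeasurableSet (Metric.ball c ε)ᶜ := Metric.isOpen_ball.measurableSet.compl
  have hlim := ProbabilityMeasure.tendsto_measure_of_null_frontier_of_tendsto' h.tendsto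
    (E := (Metric.ball c ε)ᶜ) (by
      have hc : c ∉ frontier (Metric.ball c ε) := fun hc =>
        hε.ne ((dist_self c).symm.trans (Metric.frontier_ball_subset_sphere hc))
      simp [Measure.dirac_apply' _ isClosed_frontier.measurableSet, hc])
  simp only [ProbabilityMeasure.coe_mk, Measure.map_const, measure_univ, one_smul,
    Measure.dirac_apply' _ hmeas,
    Set.indicator_of_notMem (show c ∉ (Metric.ball c ε)ᶜ by simp [hε]),
    Measure.map_apply_of_aemeasurable (h.forall_aemeasurable _) hmeas] at hlim
  simpa [Set.preimage, Metric.mem_ball] using hlim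

lemma tendstoInDistribution_prodMk_of_indepFun {E F : Type*}
    [MeasurableSpace E] [TopologicalSpace E] [TopologicalSpace.PseudoMetrizableSpace E]
    [SecondCountableTopology E] [BorelSpace E]
    [MeasurableSpace F] [TopologicalSpace F] [TopologicalSpace.PseudoMetrizableSpace F]
    [SecondCountableTopology F] [BorelSpace F]
    {X : ι → Ω → E} {Y : ι → Ω → F} {Z : Ω' → E} {W : Ω' → F}
    (hX : TendstoInDistribution X l Z (fun _ => P) P')
    (hY : TendstoInDistribution Y l W (fun _ => P) P')
    (hXY : ∀ i, IndepFun (X i) (Y i) P) (hZW : IndepFun Z W P') :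
    TendstoInDistribution (fun i ω => (X i ω, Y i ω)) l (fun ω => (Z ω, W ω)) (fun _ => P) P' where
  forall_aemeasurable i := (hX.forall_aemeasurable i).prodMk (hY.forall_aemeasurable i)
  aemeasurable_limit := hX.aemeasurable_limit.prodMk hY.aemeasurable_limit
  tendsto := by
    have hlaw i := (indepFun_iff_map_prod_eq_prod_map_map (hX.forall_aemeasurable i)
      (hY.forall_aemeasurable i)).1 (hXY i)
    have hlaw_limit := (indepFun_iff_map_prod_eq_prod_map_map hX.aemeasurable_limit
      hY.aemeasurable_limit).1 hZW
    simp only [hlaw, hlaw_limit]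
    exact (ProbabilityMeasure.continuous_prod.tendsto _).comp (hX.tendsto.prodMk_nhds hY.tendsto)

lemma tendstoInMeasure_mul_zero [l.IsCountablyGenerated] {W : ι → Ω → ℝ} {Z : Ω' → ℝ} {c : ι → ℝ}
    (hW : TendstoInDistribution W l Z (fun _ => P) P') (hc : Tendsto c l (𝓝 0)) :
    TendstoInMeasure P (fun i ω => c i * W i ω) l fun _ => 0 := by
  have hc' : TendstoInMeasure P (fun i _ => c i) l fun _ : Ω => 0 :=
    tendsto_inProbability_iff.1 (hc.comp tendsto_fst_inProbability)
  have := hW.continuous_comp_prodMk_of_tendstoInMeasure_const (g := fun x : ℝ × ℝ => x.2 * x.1)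
    (by fun_prop) hc' (by fun_prop)
  simp only [zero_mul] at this
  exact tendstoInMeasure_of_tendstoInDistribution_const this

lemma tendsto_measureReal_abs_le_mul [l.IsCountablyGenerated] {U R : ι → Ω → ℝ} {Z : Ω' → ℝ}
    [NullSingletonClass (P'.map Z)] (hU : TendstoInDistribution U l Z (fun _ => P) P')
    (hR : TendstoInMeasure P R l fun _ => 1) (hRm : ∀ i, AEMeasurable (R i) P) (z : ℝ) :
    Tendsto (fun i => P.real {ω | |U i ω| ≤ z * R i ω}) l (𝓝 (P'.real {ω | |Z ω| ≤ z})) := by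
  have hT := hU.continuous_comp_prodMk_of_tendstoInMeasure_const
    (g := fun x : ℝ × ℝ => |x.1| - z * x.2) (by fun_prop) hR hRm
  have hlim := ProbabilityMeasure.tendsto_measure_of_null_frontier_of_tendsto' hT.tendsto
    (E := Set.Iic 0) (by
      have hfrontier : (fun x : ℝ => |x| - z * 1) ⁻¹' {0} ⊆ {z, -z} := fun x hx =>
        eq_or_eq_neg_of_abs_eq (by simpa [sub_eq_zero] using hx)
      rw [ProbabilityMeasure.coe_mk, frontier_Iic,
        ← Function.comp_def (fun x : ℝ => |x| - z * 1) Z,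
        ← AEMeasurable.map_map_of_aemeasurable (by fun_prop) hU.aemeasurable_limit,
        Measure.map_apply (by fun_prop) (measurableSet_singleton _)]
      exact measure_mono_null hfrontier ((Set.toFinite _).measure_zero _))
  simp only [ProbabilityMeasure.coe_mk, measurableSet_Iic,
    Measure.map_apply_of_aemeasurable (hT.forall_aemeasurable _),
    Measure.map_apply_of_aemeasurable hT.aemeasurable_limit] at hlim
  simpa [Set.preimage, measureReal_def, Function.comp_def] using
    (ENNReal.tendsto_toReal (measure_ne_top _ _)).comp hlim

end ConvergenceInDistribution

section StandardNormal

variable {ι Ω : Type*} [MeasurableSpace Ω] {P : Measure Ω} {l : Filter ι}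

lemma hasLaw_mul_add_mul_gaussianReal {U V : Ω → ℝ} (hU : HasLaw U (gaussianReal 0 1) P)
    (hV : HasLaw V (gaussianReal 0 1) P) (hUV : IndepFun U V P) {a b : ℝ}
    (hab : a ^ 2 + b ^ 2 = 1) :
    HasLaw (fun ω => a * U ω + b * V ω) (gaussianReal 0 1) P where
  aemeasurable := by fun_prop
  map_eq := by
    have h := gaussianReal_add_gaussianReal_of_indepFun
      (hUV.comp (measurable_const_mul a) (measurable_const_mul b))
      (gaussianReal_const_mul hU a).map_eq (gaussianReal_const_mul hV b).map_eq
    convert! h using 2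
    · simp
    · ext; simp [hab]

variable [IsProbabilityMeasure P] [l.IsCountablyGenerated] {U V : ι → Ω → ℝ} {a b : ι → ℝ}

lemma tendstoInDistribution_mul_add_mul_of_tendsto {a₀ b₀ : ℝ}
    (hU : TendstoInDistribution U l id (fun _ => P) (gaussianReal 0 1))
    (hV : TendstoInDistribution V l id (fun _ => P) (gaussianReal 0 1))
    (hUV : ∀ i, IndepFun (U i) (V i) P) (ha : Tendsto a l (𝓝 a₀)) (hb : Tendsto b l (𝓝 b₀))
    (hab : a₀ ^ 2 + b₀ ^ 2 = 1) :
    TendstoInDistribution (fun i ω => a i * U i ω + b i * V i ω) l id (fun _ => P)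
      (gaussianReal 0 1) := by
  have hfst : HasLaw Prod.fst (gaussianReal 0 1) ((gaussianReal 0 1).prod (gaussianReal 0 1)) :=
    measurePreserving_fst.hasLaw
  have hsnd : HasLaw Prod.snd (gaussianReal 0 1) ((gaussianReal 0 1).prod (gaussianReal 0 1)) :=
    measurePreserving_snd.hasLaw
  have hind := indepFun_prod (μ := gaussianReal 0 1) (ν := gaussianReal 0 1)
    measurable_id measurable_id
  have hpair := tendstoInDistribution_prodMk_of_indepFun
    (tendstoInDistribution_of_forall_identDistrib hU
      (fun i => .refl (hU.forall_aemeasurable i)) (HasLaw.id.identDistrib hfst))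
    (tendstoInDistribution_of_forall_identDistrib hV
      (fun i => .refl (hV.forall_aemeasurable i)) (HasLaw.id.identDistrib hsnd)) hUV hind
  have hcoef : TendstoInMeasure P (fun i _ => (a i, b i)) l fun _ : Ω => (a₀, b₀) :=
    tendsto_inProbability_iff.1 ((ha.prodMk_nhds hb).comp tendsto_fst_inProbability)
  refine tendstoInDistribution_of_forall_identDistrib
    (hpair.continuous_comp_prodMk_of_tendstoInMeasure_const
      (g := fun x : (ℝ × ℝ) × ℝ × ℝ => x.2.1 * x.1.1 + x.2.2 * x.1.2) (by fun_prop) hcoef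
      (by fun_prop)) (fun i => .refl ?_)
    ((hasLaw_mul_add_mul_gaussianReal hfst hsnd hind hab).identDistrib .id)
  exact ((hU.forall_aemeasurable i).const_mul _).add ((hV.forall_aemeasurable i).const_mul _)

/-- The coefficients need not converge, but they stay in a compact set, and the limit law does not
depend on the subsequential limit of the coefficients. -/
lemma tendstoInDistribution_mul_add_mul
    (hU : TendstoInDistribution U l id (fun _ => P) (gaussianReal 0 1))
    (hV : TendstoInDistribution V l id (fun _ => P) (gaussianReal 0 1))
    (hUV : ∀ i, IndepFun (U i) (V i) P) (hab : ∀ i, a i ^ 2 + b i ^ 2 = 1) :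
    TendstoInDistribution (fun i ω => a i * U i ω + b i * V i ω) l id (fun _ => P)
      (gaussianReal 0 1) where
  forall_aemeasurable i :=
    ((hU.forall_aemeasurable i).const_mul _).add ((hV.forall_aemeasurable i).const_mul _)
  tendsto := by
    refine tendsto_of_subseq_tendsto fun ns hns => ?_
    have hmem n : (a (ns n), b (ns n)) ∈ Set.Icc (-1 : ℝ) 1 ×ˢ Set.Icc (-1 : ℝ) 1 := by
      have := hab (ns n)
      simp only [Set.mem_prod, Set.mem_Icc, ← abs_le, ← sq_le_one_iff_abs_le_one]
      constructor <;> nlinarith [sq_nonneg (a (ns n)), sq_nonneg (b (ns n))]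
    obtain ⟨c, -, ms, hms, hlim⟩ := (isCompact_Icc.prod isCompact_Icc).tendsto_subseq hmem
    have hc : c.1 ^ 2 + c.2 ^ 2 = 1 :=
      tendsto_nhds_unique ((hlim.fst_nhds.pow 2).add (hlim.snd_nhds.pow 2))
        (by simp [hab])
    have hsub := hns.comp hms.tendsto_atTop
    exact ⟨ms, (tendstoInDistribution_mul_add_mul_of_tendsto
      (tendstoInDistribution_comp_of_tendsto hU hsub)
      (tendstoInDistribution_comp_of_tendsto hV hsub)
      (fun n => hUV _) hlim.fst_nhds hlim.snd_nhds hc).tendsto⟩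

lemma gaussianReal_real_abs_le {α z : ℝ} (hα : α < 1)
    (hz : cdf (gaussianReal 0 1) z = 1 - α / 2) :
    (gaussianReal 0 1).real {x | |x| ≤ z} = 1 - α := by
  set γ := gaussianReal 0 1
  have hIic : γ.real (Set.Iic z) = 1 - α / 2 := by rw [← cdf_eq_real, hz]
  have hIio : γ.real (Set.Iio (-z)) = α / 2 := by
    have hneg : γ.map (fun x => -x) = γ := by simp [γ, gaussianReal_map_neg]
    calc γ.real (Set.Iio (-z)) = (γ.map fun x => -x).real (Set.Iio (-z)) := by rw [hneg]
      _ = γ.real (Set.Iic z)ᶜ := by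
        rw [map_measureReal_apply measurable_neg measurableSet_Iio]
        congr 1
        ext x
        simp
      _ = α / 2 := by rw [measureReal_compl measurableSet_Iic, hIic]; simp
  have hsub : Set.Iio (-z) ⊆ Set.Iic z := by
    suffices 0 ≤ z from fun x (hx : x < -z) => show x ≤ z by linarith
    by_contra! hz0
    have : γ.real (Set.Iic z) ≤ γ.real (Set.Iio (-z)) :=
      measureReal_mono fun x (hx : x ≤ z) => show x < -z by linarith
    linarith
  calc γ.real {x | |x| ≤ z} = γ.real (Set.Iic z \ Set.Iio (-z)) := by
        congr 1
        ext x
        simp [abs_le, and_comm]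
    _ = 1 - α := by rw [measureReal_sdiff hsub measurableSet_Iio, hIic, hIio]; ring

end StandardNormal

section BinomialCLT

variable {ι Ω : Type*} [MeasurableSpace Ω] {P : Measure Ω} {l : Filter ι}

lemma charFun_binomialReal (n : ℕ) (p : unitInterval) (t : ℝ) :
    charFun (binomialReal n p p.2.2) t = charFun (bernoulliMeasure (1 : ℝ) 0 p) t ^ n := by
  have hbernoulli : charFun (bernoulliMeasure (1 : ℝ) 0 p) t =
      p * Complex.exp (t * Complex.I) + (1 - p) := by
    simp [charFun_apply_real, integral_bernoulliMeasure]
  have hq : (1 : NNReal) - (p : ℝ).toNNReal = (1 - p : ℝ).toNNReal := by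
    ext
    rw [NNReal.coe_sub (Real.toNNReal_le_one.2 p.2.2), Real.coe_toNNReal _ p.2.1,
      Real.coe_toNNReal _ (sub_nonneg.2 p.2.2), NNReal.coe_one]
  rw [charFun_apply_real, binomialReal, integral_map (by fun_prop) (by fun_prop),
    PMF.integral_eq_sum, hbernoulli, add_pow, Finset.sum_range]
  refine Finset.sum_congr rfl fun i _ => ?_
  simp only [PMF.binomial, hq, Fin.val_last, ENNReal.coe_mul, ENNReal.coe_pow, ENNReal.coe_natCast,
    PMF.ofFintype_apply, ENNReal.toReal_mul, ENNReal.toReal_pow, ENNReal.coe_toReal,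
    Real.coe_toNNReal', p.2.1, sup_of_le_left, sub_nonneg, p.2.2, ENNReal.toReal_natCast,
    Complex.ofReal_natCast, Complex.real_smul, Complex.ofReal_mul, Complex.ofReal_pow,
    Complex.ofReal_sub, Complex.ofReal_one, mul_pow, ← Complex.exp_nat_mul]
  ring_nf

lemma hasLaw_sum_binomialReal {B : ℕ → Ω → ℝ} {p : unitInterval}
    (hB : ∀ i, HasLaw (B i) (bernoulliMeasure 1 0 p) P) (hindep : iIndepFun B P) (n : ℕ) :
    HasLaw (fun ω => ∑ i ∈ Finset.range n, B i ω) (binomialReal n p p.2.2) P where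
  aemeasurable := by fun_prop
  map_eq := by
    have := hindep.isProbabilityMeasure
    have : IsFiniteMeasure (binomialReal n p p.2.2) := by unfold binomialReal; infer_instance
    refine Measure.ext_of_charFun (funext fun t => ?_)
    rw [(hindep.restrict _).charFun_map_fun_finsetSum_eq_prod fun i _ => (hB i).aemeasurable]
    simp [(hB _).map_eq, charFun_binomialReal]

lemma variance_bernoulliMeasure_one_zero (p : unitInterval) :
    variance id (bernoulliMeasure (1 : ℝ) 0 p) = p * (1 - p) := by
  rw [variance_eq_integral aemeasurable_id, integral_bernoulliMeasure, integral_bernoulliMeasure]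
  simp only [id_eq, smul_eq_mul, mul_one, mul_zero, add_zero, zero_sub, even_two, Even.neg_pow]
  ring

lemma tendstoInDistribution_sum_standardized [IsProbabilityMeasure P] {B : ℕ → Ω → ℝ}
    (hvar : variance (B 0) P ≠ 0) (hindep : iIndepFun B P)
    (hident : ∀ i, IdentDistrib (B i) (B 0) P P) :
    TendstoInDistribution (fun n ω => (∑ k ∈ Finset.range n, B k ω - n * P[B 0]) /
      √(n * variance (B 0) P)) atTop id (fun _ => P) (gaussianReal 0 1) := by
  set v := variance (B 0) P
  have hv : 0 ≤ v := variance_nonneg _ _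
  have hlimit : HasLaw (fun x => √v * x) (gaussianReal 0 v.toNNReal) (gaussianReal 0 1) := by
    convert! gaussianReal_const_mul HasLaw.id √v using 2
    · rw [mul_zero]
    · ext
      rw [Real.coe_toNNReal _ hv, mul_one, NNReal.coe_mk, Real.sq_sqrt hv]
  have hclt := (tendstoInDistribution_inv_sqrt_mul_sum_sub hlimit
    (memLp_two_of_variance_ne_zero (hident 0).aemeasurable_snd.aestronglyMeasurable hvar)
    hindep hident).continuous_comp (g := (· / √v)) (by fun_prop)
  have hid : (· / √v) ∘ (fun x => √v * x) = id := by
    ext x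
    simp only [Function.comp_apply, id_eq, mul_div_cancel_left₀ x ((Real.sqrt_ne_zero hv).2 hvar)]
  rw [hid] at hclt
  convert! hclt using 3 with n ω
  rw [Function.comp_apply, Real.sqrt_mul n.cast_nonneg, inv_mul_eq_div, div_div]

lemma tendstoInDistribution_binomial_standardized [IsProbabilityMeasure P] {p : ℝ}
    (hp : p ∈ Set.Ioo 0 1) {n : ι → ℕ} (hn : Tendsto n l atTop) {X : ι → Ω → ℝ}
    (hX : ∀ i, HasLaw (X i) (binomialReal (n i) p hp.2.le) P) :
    TendstoInDistribution (fun i ω => (X i ω - n i * p) / √(n i * p * (1 - p))) l id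
      (fun _ => P) (gaussianReal 0 1) := by
  let pI : unitInterval := ⟨p, hp.1.le, hp.2.le⟩
  obtain ⟨Ω', _, Q, B, -, hB, hindep, _⟩ := exists_iid ℕ (bernoulliMeasure (1 : ℝ) 0 pI)
  have hmean : Q[B 0] = p := by simp [(hB 0).integral_eq, integral_bernoulliMeasure, pI]
  have hvar : variance (B 0) Q = p * (1 - p) := by
    rw [(hB 0).variance_eq, variance_bernoulliMeasure_one_zero]
  have hclt := tendstoInDistribution_comp_of_tendsto (tendstoInDistribution_sum_standardized
    (hvar ▸ (mul_pos hp.1 (sub_pos.2 hp.2)).ne') hindep fun i => (hB i).identDistrib (hB 0)) hn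
  simp only [hmean, hvar, ← mul_assoc] at hclt
  exact tendstoInDistribution_of_forall_identDistrib hclt (fun i =>
    ((hasLaw_sum_binomialReal hB hindep (n i)).identDistrib (hX i)).comp
      (u := fun x => (x - n i * p) / √(n i * p * (1 - p))) (by fun_prop)) (.refl (by fun_prop))

end BinomialCLT

section RelativeVariance

/-- The variance of `X / (n * p)` for `X` binomial with parameters `n` and `p`, which is also the
delta-method variance of `log X`. -/
noncomputable def relVariance (p : ℝ) (n : ℕ) : ℝ := (1 - p) / (n * p)

variable {p : ℝ} {n : ℕ}

lemma relVariance_pos (hp : p ∈ Set.Ioo 0 1) (hn : 0 < n) : 0 < relVariance p n :=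
  div_pos (sub_pos.2 hp.2) (mul_pos (Nat.cast_pos.2 hn) hp.1)

lemma sqrt_relVariance_mul_standardized (hp : p ∈ Set.Ioo 0 1) (hn : 0 < n) (x : ℝ) :
    √(relVariance p n) * ((x - n * p) / √(n * p * (1 - p))) = x / n / p - 1 := by
  have hp0 := hp.1
  have hnp : 0 < n * p := by positivity
  have hvar : 0 < n * p * (1 - p) := mul_pos hnp (sub_pos.2 hp.2)
  have hsqrt : √(relVariance p n) = √(n * p * (1 - p)) / (n * p) := by
    rw [relVariance, ← Real.sqrt_sq hnp.le, ← Real.sqrt_div' _ (sq_nonneg _), Real.sqrt_sq hnp.le]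
    congr 1
    field_simp
  rw [hsqrt]
  field_simp

lemma one_div_sub_one_div_eq_relVariance_mul (hp : p ∈ Set.Ioo 0 1) (hn : 0 < n) (x : ℝ) :
    1 / x - 1 / n = ((x / n)⁻¹ - 1) / (p⁻¹ - 1) * relVariance p n := by
  have hp0 := hp.1
  have hq : p⁻¹ - 1 = (1 - p) / p := by field_simp
  have hq0 : 0 < 1 - p := sub_pos.2 hp.2
  rw [hq, relVariance, inv_div]
  field_simp

lemma tendsto_relVariance (p : ℝ) : Tendsto (relVariance p) atTop (𝓝 0) :=
  (tendsto_const_div_atTop_nhds_zero_nat ((1 - p) / p)).congr fun n => by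
    rw [relVariance, div_div, mul_comm]

end RelativeVariance

section AsymptoticallyBinomial

variable {ι Ω : Type*} [MeasurableSpace Ω]

/-- The counts `X i` satisfy the central limit theorem of the binomial distribution with `n i`
trials and success probability `p`, where `n i` tends to infinity. Unlike the binomial law itself,
this property survives the addition of noise of lower order. -/
structure IsAsymptoticallyBinomial (P : Measure Ω) [IsProbabilityMeasure P] (l : Filter ι) (p : ℝ)
    (n : ι → ℕ) (X : ι → Ω → ℝ) : Prop where
  prob_mem : p ∈ Set.Ioo 0 1
  trials_pos : ∀ i, 0 < n i
  tendsto_trials : Tendsto n l atTop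
  tendsto_standardized : TendstoInDistribution
    (fun i ω => (X i ω - n i * p) / √(n i * p * (1 - p))) l id (fun _ => P) (gaussianReal 0 1)

namespace IsAsymptoticallyBinomial

variable {P : Measure Ω} [IsProbabilityMeasure P] {l : Filter ι} {p : ℝ} {n : ι → ℕ}
  {X L : ι → Ω → ℝ}

lemma of_hasLaw (hp : p ∈ Set.Ioo 0 1) (hn : ∀ i, 0 < n i) (hn_top : Tendsto n l atTop)
    (hX : ∀ i, HasLaw (X i) (binomialReal (n i) p hp.2.le) P) :
    IsAsymptoticallyBinomial P l p n X where
  prob_mem := hp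
  trials_pos := hn
  tendsto_trials := hn_top
  tendsto_standardized := tendstoInDistribution_binomial_standardized hp hn_top hX

variable (hX : IsAsymptoticallyBinomial P l p n X)
include hX

lemma aemeasurable (i : ι) : AEMeasurable (X i) P := by
  have hpos : 0 < n i * p * (1 - p) := mul_pos
    (mul_pos (Nat.cast_pos.2 (hX.trials_pos i)) hX.prob_mem.1) (sub_pos.2 hX.prob_mem.2)
  refine (((hX.tendsto_standardized.forall_aemeasurable i).mul_const √(n i * p * (1 - p))).add_const
    (n i * p)).congr (ae_of_all _ fun ω => ?_)
  simp [(Real.sqrt_pos.2 hpos).ne']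

lemma add_noise [l.IsCountablyGenerated] (hL : ∀ i, MemLp (L i) 2 P) (hmean : ∀ i, P[L i] = 0)
    (hvar : Tendsto (fun i => variance (L i) P / n i) l (𝓝 0)) :
    IsAsymptoticallyBinomial P l p n fun i ω => X i ω + L i ω where
  prob_mem := hX.prob_mem
  trials_pos := hX.trials_pos
  tendsto_trials := hX.tendsto_trials
  tendsto_standardized := by
    have hpq : 0 < p * (1 - p) := mul_pos hX.prob_mem.1 (sub_pos.2 hX.prob_mem.2)
    have hnoise : TendstoInMeasure P (fun i ω => (√(n i * p * (1 - p)))⁻¹ * L i ω) l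
        fun _ => 0 := by
      refine tendstoInMeasure_const_of_tendsto_variance (fun i => (hL i).const_mul _)
        (fun i => by rw [integral_const_mul, hmean, mul_zero]) ?_
      convert! hvar.div_const (p * (1 - p)) using 2 with i
      · rw [variance_const_mul, inv_pow, mul_assoc,
          Real.sq_sqrt (mul_nonneg (n i).cast_nonneg hpq.le)]
        field_simp
      · simp
    convert! hX.tendsto_standardized.add_of_tendstoInMeasure_const hnoise
      (fun i => (hL i).aemeasurable.const_mul _) using 2
    · ext ω
      simp only [Pi.add_apply]
      ring
    · simp

variable [l.IsCountablyGenerated]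

lemma tendsto_proportion :
    Tendsto (fun q : ι × Ω => X q.1 q.2 / n q.1) (inProbability P l) (𝓝 p) := by
  have hsqrt : Tendsto (fun i => √(relVariance p (n i))) l (𝓝 0) := by
    simpa using ((tendsto_relVariance p).comp hX.tendsto_trials).sqrt
  have hrel := tendsto_inProbability_iff.2 (tendstoInMeasure_mul_zero hX.tendsto_standardized hsqrt)
  simp only [sqrt_relVariance_mul_standardized hX.prob_mem (hX.trials_pos _)] at hrel
  simpa [hX.prob_mem.1.ne'] using (hrel.add_const 1).mul_const p

lemma isEquivalent_one_div_sub_one_div :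
    (fun q : ι × Ω => 1 / X q.1 q.2 - 1 / n q.1) ~[inProbability P l]
      fun q => relVariance p (n q.1) := by
  have hp : p⁻¹ - 1 ≠ 0 := (sub_pos.2 ((one_lt_inv₀ hX.prob_mem.1).2 hX.prob_mem.2)).ne'
  refine isEquivalent_of_tendsto_one ?_
  have hratio := ((hX.tendsto_proportion.inv₀ hX.prob_mem.1.ne').sub_const 1).div_const (p⁻¹ - 1)
  rw [div_self hp] at hratio
  refine hratio.congr fun q => ?_
  rw [Pi.div_apply, one_div_sub_one_div_eq_relVariance_mul hX.prob_mem (hX.trials_pos _),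
    mul_div_cancel_right₀ _ (relVariance_pos hX.prob_mem (hX.trials_pos _)).ne']

end IsAsymptoticallyBinomial

end AsymptoticallyBinomial

section RelativeRisk

lemma abs_div_sub_div_le_iff {px py a b z r σ : ℝ} (hpx : 0 < px) (hpy : 0 < py) (ha : 0 < a)
    (hb : 0 < b) (hσ : 0 < σ) :
    |a / b - px / py| ≤ z * (a / b * r) ↔ |(a / px - b / py) / σ| ≤ z * (a / px * (r / σ)) := by
  have hleft : a / b - px / py = px * σ / b * ((a / px - b / py) / σ) := by field_simp
  have hright : z * (a / b * r) = px * σ / b * (z * (a / px * (r / σ))) := by field_simp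
  have hscale : 0 < px * σ / b := by positivity
  rw [hleft, hright, abs_mul, abs_of_pos hscale, mul_le_mul_iff_right₀ hscale]

lemma tendsto_sqrt_div_sqrt_of_isEquivalent {β : Type*} {l : Filter β} {u v : β → ℝ}
    (huv : u ~[l] v) (hv : ∀ x, 0 < v x) : Tendsto (fun x => √(u x) / √(v x)) l (𝓝 1) := by
  have hratio := ((isEquivalent_iff_tendsto_one (.of_forall fun x => (hv x).ne')).1 huv).sqrt
  simpa [Real.sqrt_div' _ (hv _).le] using hratio

variable {ι Ω : Type*} [MeasurableSpace Ω] {P : Measure Ω} [IsProbabilityMeasure P]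
  {l : Filter ι} [l.IsCountablyGenerated] {px py : ℝ} {nx ny : ι → ℕ} {X Y : ι → Ω → ℝ}

lemma tendstoInDistribution_relative_difference (hX : IsAsymptoticallyBinomial P l px nx X)
    (hY : IsAsymptoticallyBinomial P l py ny Y) (hXY : ∀ i, IndepFun (X i) (Y i) P) :
    TendstoInDistribution (fun i ω => (X i ω / nx i / px - Y i ω / ny i / py) /
      √(relVariance px (nx i) + relVariance py (ny i))) l id (fun _ => P) (gaussianReal 0 1) := by
  have hvx i := relVariance_pos hX.prob_mem (hX.trials_pos i)
  have hvy i := relVariance_pos hY.prob_mem (hY.trials_pos i)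
  have hcomb := tendstoInDistribution_mul_add_mul
    (a := fun i => √(relVariance px (nx i)) / √(relVariance px (nx i) + relVariance py (ny i)))
    (b := fun i => -√(relVariance py (ny i)) / √(relVariance px (nx i) + relVariance py (ny i)))
    hX.tendsto_standardized hY.tendsto_standardized
    (fun i => (hXY i).comp (φ := fun x => (x - nx i * px) / √(nx i * px * (1 - px)))
      (ψ := fun y => (y - ny i * py) / √(ny i * py * (1 - py))) (by fun_prop) (by fun_prop))
    fun i => by
      rw [div_pow, div_pow, neg_sq, Real.sq_sqrt (hvx i).le, Real.sq_sqrt (hvy i).le,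
        Real.sq_sqrt (add_pos (hvx i) (hvy i)).le, ← add_div,
        div_self (add_pos (hvx i) (hvy i)).ne']
  convert! hcomb using 3 with i ω
  rw [div_mul_eq_mul_div, div_mul_eq_mul_div, neg_mul, ← add_div,
    sqrt_relVariance_mul_standardized hX.prob_mem (hX.trials_pos i),
    sqrt_relVariance_mul_standardized hY.prob_mem (hY.trials_pos i)]
  ring

lemma tendstoInMeasure_plugIn_ratio (hX : IsAsymptoticallyBinomial P l px nx X)
    (hY : IsAsymptoticallyBinomial P l py ny Y) :
    TendstoInMeasure P (fun i ω => X i ω / nx i / px *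
      (√(1 / X i ω - 1 / nx i + 1 / Y i ω - 1 / ny i) /
        √(relVariance px (nx i) + relVariance py (ny i)))) l fun _ => 1 := by
  have hvx i := relVariance_pos hX.prob_mem (hX.trials_pos i)
  have hvy i := relVariance_pos hY.prob_mem (hY.trials_pos i)
  have hequiv := hX.isEquivalent_one_div_sub_one_div.add_add_of_nonneg
    (fun q : ι × Ω => (hvx q.1).le) (fun q : ι × Ω => (hvy q.1).le)
    hY.isEquivalent_one_div_sub_one_div
  have hsqrt := tendsto_sqrt_div_sqrt_of_isEquivalent hequiv fun q =>
    add_pos (hvx q.1) (hvy q.1)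
  refine tendsto_inProbability_iff.1 ?_
  simpa only [Pi.add_apply, ← add_sub_assoc, div_self hX.prob_mem.1.ne', one_mul] using
    (hX.tendsto_proportion.div_const px).mul hsqrt

theorem relative_risk_CI_valid_general {α z : ℝ} (hα : α < 1)
    (hz : cdf (gaussianReal 0 1) z = 1 - α / 2) (hX : IsAsymptoticallyBinomial P l px nx X)
    (hY : IsAsymptoticallyBinomial P l py ny Y) (hXY : ∀ i, IndepFun (X i) (Y i) P) :
    Tendsto (fun i => P.real {ω | |X i ω / nx i / (Y i ω / ny i) - px / py| ≤
      z * (X i ω / nx i / (Y i ω / ny i) * √(1 / X i ω - 1 / nx i + 1 / Y i ω - 1 / ny i))})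
      l (𝓝 (1 - α)) := by
  have : NullSingletonClass ((gaussianReal 0 1).map id) := by
    rw [Measure.map_id]
    exact nullSingletonClass_gaussianReal one_ne_zero
  have hcover := tendsto_measureReal_abs_le_mul
    (tendstoInDistribution_relative_difference hX hY hXY) (tendstoInMeasure_plugIn_ratio hX hY)
    (fun i => by
      have := hX.aemeasurable i
      have := hY.aemeasurable i
      fun_prop) z
  simp only [id_eq, gaussianReal_real_abs_le hα hz] at hcover
  refine tendsto_measureReal_of_eventually_iff hcover ?_
  filter_upwards [hX.tendsto_proportion.eventually_const_lt hX.prob_mem.1,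
    hY.tendsto_proportion.eventually_const_lt hY.prob_mem.1] with q hXq hYq
  exact (abs_div_sub_div_le_iff hX.prob_mem.1 hY.prob_mem.1 hXq hYq <| Real.sqrt_pos.2 <|
    add_pos (relVariance_pos hX.prob_mem (hX.trials_pos q.1))
      (relVariance_pos hY.prob_mem (hY.trials_pos q.1))).symm

end RelativeRisk

/-- **Asymptotically valid confidence interval for the relative risk from zero-mean-noised
counts** (Theorem: Valid CI for the relative risk).  With `z = Φ⁻¹(1 − α/2)`, the
plug-in normal-approximation interval `p̃_k ± z·Ṽ_k` has asymptotic coverage `1 − α`. -/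
theorem relative_risk_CI_valid {Ω : Type*} [MeasurableSpace Ω]
    (P : Measure Ω) [IsProbabilityMeasure P]
    (px py Sig α z : ℝ) (hpx : px ∈ Set.Ioo (0 : ℝ) 1) (hpy : py ∈ Set.Ioo (0 : ℝ) 1)
    (hSig : 0 < Sig) (hα : α ∈ Set.Ioo (0 : ℝ) 1)
    (hz : cdf (gaussianReal 0 1) z = 1 - α / 2)
    (nx ny : ℕ → ℕ) (hnx : ∀ k, 0 < nx k) (hny : ∀ k, 0 < ny k)
    (hnxTop : Tendsto nx atTop atTop) (hnyTop : Tendsto ny atTop atTop)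
    (X Y Lx Ly : ℕ → Ω → ℝ)
    (hmX : ∀ k, Measurable (X k)) (hmY : ∀ k, Measurable (Y k))
    (hmLx : ∀ k, Measurable (Lx k)) (hmLy : ∀ k, Measurable (Ly k))
    (hlawX : ∀ k, Measure.map (X k) P = binomialReal (nx k) px hpx.2.le)
    (hlawY : ∀ k, Measure.map (Y k) P = binomialReal (ny k) py hpy.2.le)
    (hLx2 : ∀ k, MemLp (Lx k) 2 P) (hLy2 : ∀ k, MemLp (Ly k) 2 P)
    (hLxMean : ∀ k, ∫ ω, Lx k ω ∂P = 0) (hLyMean : ∀ k, ∫ ω, Ly k ω ∂P = 0)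
    (hLxVar : ∀ k, variance (Lx k) P = Sig) (hLyVar : ∀ k, variance (Ly k) P = Sig)
    (hindep : ∀ k, iIndepFun ![X k, Y k, Lx k, Ly k] P) :
    Tendsto
      (fun k =>
        (P {ω |
          |((X k ω + Lx k ω) / (nx k : ℝ)) / ((Y k ω + Ly k ω) / (ny k : ℝ)) - px / py| ≤
            z * (((X k ω + Lx k ω) / (nx k : ℝ)) / ((Y k ω + Ly k ω) / (ny k : ℝ)) *
              Real.sqrt (1 / (X k ω + Lx k ω) - 1 / (nx k : ℝ) +
                1 / (Y k ω + Ly k ω) - 1 / (ny k : ℝ)))}).toReal)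
      atTop (nhds (1 - α)) := by
  have hnoise {n : ℕ → ℕ} (hn : Tendsto n atTop atTop) :
      Tendsto (fun k => Sig / n k) atTop (𝓝 0) :=
    (tendsto_natCast_atTop_atTop.comp hn).const_div_atTop Sig
  have hX := (IsAsymptoticallyBinomial.of_hasLaw hpx hnx hnxTop
    fun k => ⟨(hmX k).aemeasurable, hlawX k⟩).add_noise hLx2 hLxMean
      (by simpa only [hLxVar] using hnoise hnxTop)
  have hY := (IsAsymptoticallyBinomial.of_hasLaw hpy hny hnyTop
    fun k => ⟨(hmY k).aemeasurable, hlawY k⟩).add_noise hLy2 hLyMean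
      (by simpa only [hLyVar] using hnoise hnyTop)
  have hmeas k : ∀ i, Measurable (![X k, Y k, Lx k, Ly k] i) := by
    simp [Fin.forall_fin_succ, hmX, hmY, hmLx, hmLy]
  exact relative_risk_CI_valid_general hα.2 hz hX hY fun k =>
    (hindep k).indepFun_add_add (hmeas k) 0 2 1 3 (by decide) (by decide) (by decide) (by decide)
end
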